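/- Let φ be a 3iet preserving morphism whose incidence matrix M_φ is nonsingular (det M_φ ≠ 0). Then M_φ belongs to E(3,ℕ), i.e., M_φ · E · M_φᵀ = E or M_φ · E · M_φᵀ = −E, and det M_φ = 1 or det M_φ = −1, where E = ![![0,1,1], ![-1,0,1], ![-1,-1,0]]. -/

import Mathlib

/-!
For a 3iet word, replacing `A ↦ 0`, `C ↦ 1` and every `B` by `01`, or every `B` by `10`, gives a
word whose walk (up by `β + γ` at each `0`, down by `α + β` at each `1`) stays in an interval of
length `α + 2β + γ`; hence both binary codings are balanced (`balanced_of_3iet`). The binary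
codings of `φ(u)` are therefore balanced for every 3iet word `u` (`balanced_image`).

For suitable parameters close to a rational degeneration, 3iet words contain
`(A C^(q+1))^k (B C^q)^k` and `(B C^q)^k (C A C^q)^k` for arbitrary `q`, `k`
(`balanced_AC_BC`, `balanced_BC_CAC`). Write `a`, `c`, `b` for the binary images of `A C^q`, `C`,
`B C^q`, and `L_l` for the vector counting zeros and ones in the binary image of the letter `l`.

* Balance of `(ac)^k b^k` for all `k` forces `ac` and `b` to have equal slopes (`slope_eq`). The
  cases `q = 0, 1` make all three determinants `det (L_i, L_j)`, `i < j`, equal to a single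
  integer `λ` (`minors_eq`), which says `M E Mᵀ = λ E`. Moreover `det M = λ μ` with
  `μ = |φ(B)|_B - |φ(A)|_B - |φ(C)|_B` (`det_incMat`), and `L_B = L_A + L_C` when `λ ≠ 0`.
* For words `U`, `V` of length `N` with `Y` ones each, balance of `U³V³` bounds the difference of
  the sums of ones over all prefixes by `g = gcd (N, Y)` (`prefSum_sub_le`). This applies to the
  pairs `(ac, b)` and `(b, ca)`. The prefix sums of `ac` and `ca` differ by exactly `λ`, a multiple
  of `g`, while passing from `B ↦ 01` to `B ↦ 10` changes the difference of the prefix sums of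
  `b` and `ac` by exactly `μ ≠ 0`. Hence `|λ| = g` and `|μ| ≤ g` (`lam_eq_gcd`).
* Thus `λ` divides `L_A + L_C` and `L_A + 2 L_C`, so it divides `L_A` and `L_C`, so `λ²` divides
  `λ = det (L_A, L_C)`. Therefore `|λ| = |μ| = 1` (`abs_lam_exc`).
-/

/-- The three-letter alphabet {A, B, C}. -/
inductive Letter : Type
  | A | B | C
  deriving DecidableEq

/-- Left-closed 3-interval exchange transformation with parameters (α, β, γ),
defined piecewise on the domain [0, α+β+γ) (and extended by the same formulas
elsewhere). -/
noncomputable def Tleft (α β γ : ℝ) (x : ℝ) : ℝ :=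
  if x < α then x + β + γ else if x < α + β then x - α + γ else x - α - β

/-- The inverse of `Tleft` on its domain. -/
noncomputable def TleftInv (α β γ : ℝ) (x : ℝ) : ℝ :=
  if x < γ then x + α + β else if x < β + γ then x + α - γ else x - β - γ

/-- Right-closed 3-interval exchange transformation with parameters (α, β, γ),
defined piecewise on the domain (0, α+β+γ]. -/
noncomputable def Tright (α β γ : ℝ) (x : ℝ) : ℝ :=
  if x ≤ α then x + β + γ else if x ≤ α + β then x - α + γ else x - α - β

/-- The inverse of `Tright` on its domain. -/
noncomputable def TrightInv (α β γ : ℝ) (x : ℝ) : ℝ :=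
  if x ≤ γ then x + α + β else if x ≤ β + γ then x + α - γ else x - β - γ

/-- ℤ-indexed iteration: nonnegative powers use `f`, negative powers use the
inverse map `g`. -/
noncomputable def zIter (f g : ℝ → ℝ) : ℤ → ℝ → ℝ
  | Int.ofNat n => f^[n]
  | Int.negSucc n => g^[n + 1]

/-- The letter coding of a point, left-closed convention:
A on [0,α), B on [α,α+β), C on [α+β,α+β+γ). -/
noncomputable def codeLeft (α β : ℝ) (x : ℝ) : Letter :=
  if x < α then Letter.A else if x < α + β then Letter.B else Letter.C

/-- The letter coding of a point, right-closed convention: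
A on (0,α], B on (α,α+β], C on (α+β,α+β+γ]. -/
noncomputable def codeRight (α β : ℝ) (x : ℝ) : Letter :=
  if x ≤ α then Letter.A else if x ≤ α + β then Letter.B else Letter.C

/-- The biinfinite word coding the orbit of x₀ under the left-closed
3-interval exchange transformation with parameters (α, β, γ). -/
noncomputable def uLeft (α β γ x₀ : ℝ) (n : ℤ) : Letter :=
  codeLeft α β (zIter (Tleft α β γ) (TleftInv α β γ) n x₀)

/-- The biinfinite word coding the orbit of x₀ under the right-closed
3-interval exchange transformation with parameters (α, β, γ). -/
noncomputable def uRight (α β γ x₀ : ℝ) (n : ℤ) : Letter :=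
  codeRight α β (zIter (Tright α β γ) (TrightInv α β γ) n x₀)

/-- A biinfinite word over {A,B,C} is a 3iet word if it codes the orbit of a
point under a 3-interval exchange transformation (in either convention) whose
parameters α, β, γ > 0 satisfy: α+β and β+γ are linearly independent over ℚ. -/
def Is3ietWord (u : ℤ → Letter) : Prop :=
  ∃ α β γ x₀ : ℝ, 0 < α ∧ 0 < β ∧ 0 < γ ∧
    LinearIndependent ℚ ![α + β, β + γ] ∧
    ((x₀ ∈ Set.Ico (0 : ℝ) (α + β + γ) ∧ u = uLeft α β γ x₀) ∨
     (x₀ ∈ Set.Ioc (0 : ℝ) (α + β + γ) ∧ u = uRight α β γ x₀))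

/-- A morphism over the alphabet {A,B,C}, determined by the images of the
three letters (as an endomorphism of the free monoid {A,B,C}*). -/
abbrev Morph := Letter → List Letter

/-- `IsImageWord φ u v` says that v is the biinfinite word
···φ(u₋₂)φ(u₋₁)φ(u₀)φ(u₁)···, in which the block φ(u₀) starts at position 0:
`c m` is the position at which the block φ(u_m) starts. -/
def IsImageWord (φ : Morph) (u v : ℤ → Letter) : Prop :=
  ∃ c : ℤ → ℤ, c 0 = 0 ∧ (∀ m : ℤ, c (m + 1) = c m + (φ (u m)).length) ∧
    ∀ (m : ℤ) (i : ℕ) (h : i < (φ (u m)).length),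
      v (c m + (i : ℤ)) = (φ (u m)).get ⟨i, h⟩

/-- A morphism is 3iet preserving if its letter images are nonempty (so that
it acts on biinfinite words) and it maps every 3iet word to a 3iet word. -/
def Preserves3iet (φ : Morph) : Prop :=
  (∀ a, φ a ≠ []) ∧
  ∀ u v : ℤ → Letter, Is3ietWord u → IsImageWord φ u v → Is3ietWord v

open Matrix

/-- The letters in order A, B, C. -/
def ltr : Fin 3 → Letter := ![Letter.A, Letter.B, Letter.C]

/-- The incidence matrix of a morphism: its (i,j) entry is the number of
occurrences of the j-th letter in the image of the i-th letter. -/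
def incMat (φ : Morph) : Matrix (Fin 3) (Fin 3) ℤ :=
  fun i j => ((φ (ltr i)).count (ltr j) : ℤ)

/-- The matrix E from the paper. -/
def Emat : Matrix (Fin 3) (Fin 3) ℤ := !![0, 1, 1; -1, 0, 1; -1, -1, 0]

/-- The monoid E(3,ℕ). -/
def E3N : Set (Matrix (Fin 3) (Fin 3) ℤ) :=
  {M | (∀ i j, 0 ≤ M i j) ∧
    (M * Emat * Mᵀ = Emat ∨ M * Emat * Mᵀ = -Emat) ∧
    (M.det = 1 ∨ M.det = -1)}

/-! ### Balanced binary words -/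

/-- A binary word is balanced if any two of its factors of equal length contain
numbers of `true`s that differ by at most one. -/
def BalancedWord (W : List Bool) : Prop :=
  ∀ U V : List Bool, U <:+: W → V <:+: W → U.length = V.length →
    U.count true ≤ V.count true + 1

/-- The power `W ^ k` of a word in the free monoid. -/
def wpow {α : Type*} (k : ℕ) (W : List α) : List α := (List.replicate k W).flatten

lemma wpow_zero {α : Type*} (W : List α) : wpow 0 W = [] := by simp [wpow]

lemma wpow_succ {α : Type*} (k : ℕ) (W : List α) : wpow (k + 1) W = W ++ wpow k W := by
  simp [wpow, List.replicate_succ]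

lemma wpow_add {α : Type*} (k l : ℕ) (W : List α) :
    wpow (k + l) W = wpow k W ++ wpow l W := by
  simp only [wpow, List.replicate_add, List.flatten_append]

lemma wpow_length {α : Type*} (k : ℕ) (W : List α) :
    (wpow k W).length = k * W.length := by
  simp [wpow]

lemma wpow_count (k : ℕ) (W : List Bool) :
    (wpow k W).count true = k * W.count true := by
  induction k with
  | zero => simp [wpow_zero]
  | succ k ih => rw [wpow_succ, List.count_append, ih]; ring

lemma wpow_flatMap {α β : Type*} (k : ℕ) (W : List α) (f : α → List β) :
    (wpow k W).flatMap f = wpow k (W.flatMap f) := by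
  induction k with
  | zero => simp [wpow_zero]
  | succ k ih => rw [wpow_succ, wpow_succ, List.flatMap_append, ih]

/-- The sum, over all proper prefixes of `W`, of the number of `true`s they contain. -/
def prefSum (W : List Bool) : ℤ :=
  ∑ i ∈ Finset.range W.length, ((W.take i).count true : ℤ)

lemma prefSum_cons (x : Bool) (W : List Bool) :
    prefSum (x :: W) = prefSum W + (if x then (W.length : ℤ) else 0) := by
  unfold prefSum
  rw [List.length_cons, Finset.sum_range_succ']
  cases x <;> simp [Finset.sum_add_distrib]

lemma prefSum_append (a c : List Bool) :
    prefSum (a ++ c) = prefSum a + prefSum c + c.length * (a.count true : ℤ) := by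
  induction a with
  | nil => simp [prefSum]
  | cons x a ih =>
    rw [List.cons_append, prefSum_cons, prefSum_cons, ih]
    cases x
    · simp
    · simp; ring

/-- If arbitrarily high powers of `U` and `V` occur in balanced words
side by side, then `U` and `V` have the same density of `true`s. -/
lemma slope_eq (U V : List Bool) (h : ∀ k, BalancedWord (wpow k U ++ wpow k V)) :
    (U.length : ℤ) * V.count true = V.length * U.count true := by
  -- Factors of length `2 |U| |V|` in the two powers: the counts are even, so they agree.
  have hb := h (2 * (U.length + V.length))
  have hU : wpow (2 * V.length) U <:+: wpow (2 * (U.length + V.length)) U ++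
      wpow (2 * (U.length + V.length)) V := by
    refine ⟨[], wpow (2 * U.length) U ++ wpow (2 * (U.length + V.length)) V, ?_⟩
    rw [List.nil_append, ← List.append_assoc, ← wpow_add]
    congr 2; ring
  have hV : wpow (2 * U.length) V <:+: wpow (2 * (U.length + V.length)) U ++
      wpow (2 * (U.length + V.length)) V := by
    refine ⟨wpow (2 * (U.length + V.length)) U, wpow (2 * V.length) V, ?_⟩
    rw [List.append_assoc, ← wpow_add]
    congr 2; ring
  have hl : (wpow (2 * V.length) U).length = (wpow (2 * U.length) V).length := by
    rw [wpow_length, wpow_length]; ring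
  have h1 := hb _ _ hU hV hl
  have h2 := hb _ _ hV hU hl.symm
  rw [wpow_count, wpow_count, mul_assoc, mul_assoc] at h1 h2
  have : U.length * V.count true = V.length * U.count true := by omega
  exact_mod_cast this

/-- Shifting a period-long sum of a function that grows by `Y` over each period `N`. -/
lemma sum_shift (f : ℕ → ℤ) (N : ℕ) (Y : ℤ) (l : ℕ)
    (h : ∀ i < l, f (i + N) = f i + Y) :
    ∑ i ∈ Finset.range N, f (i + l) = ∑ i ∈ Finset.range N, f i + l * Y := by
  induction l with
  | zero => simp
  | succ l ih =>
    have ih' := ih (fun i hi => h i (by omega))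
    have h1 := Finset.sum_range_succ (fun i => f (i + l)) N
    have h2 := Finset.sum_range_succ' (fun i => f (i + l)) N
    have h3 := h l (by omega)
    have h4 : ∑ i ∈ Finset.range N, f (i + (l + 1)) =
        ∑ i ∈ Finset.range N, f (i + 1 + l) :=
      Finset.sum_congr rfl (fun i _ => by congr 1; ring)
    simp only [zero_add] at h2
    rw [add_comm N l] at h1
    rw [h4]; push_cast
    linarith

/-- The one-sided estimate behind `prefSum_sub_le`, for the function `f` counting the
`true`s in prefixes of a balanced word `U³V³`. A factor of length `l` with `t` letters `true`
has defect `N t - Y l`. When `Y l ≡ -g (mod N)`, every such defect is at most `g`: a larger one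
would be at least `g + N`, and by balance all defects within `U³` would be positive, although
they average to zero. Averaging over the factors that start in the last `U`
gives the bound. -/
lemma defect_bound (f : ℕ → ℤ) (N : ℕ) (Y g : ℤ) (l : ℕ) (hN : 0 < N) (hg : 0 < g)
    (hNl : N ≤ l) (hlN : l < 2 * N) (hdvd : (N : ℤ) ∣ Y * l + g)
    (hbal : ∀ i j, i + l ≤ 6 * N → j + l ≤ 6 * N → f (i + l) - f i ≤ f (j + l) - f j + 1)
    (h1 : ∀ i ≤ 2 * N, f (i + N) = f i + Y)
    (h2 : ∀ i < 2 * N, f (3 * N + i + N) = f (3 * N + i) + Y) :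
    ∑ i ∈ Finset.range N, f (3 * N + i) - ∑ i ∈ Finset.range N, f i - 3 * N * Y ≤ g := by
  have hN' : (0 : ℤ) < N := by exact_mod_cast hN
  have key : ∀ i, i + l ≤ 6 * N → N * (f (i + l) - f i) - Y * l ≤ g := by
    intro i hi
    by_contra hcon
    push Not at hcon
    obtain ⟨r, hr⟩ := hdvd
    have hlt : 0 < N * ((f (i + l) - f i) - r) := by linarith
    have hge : 1 ≤ (f (i + l) - f i) - r := by
      have := pos_of_mul_pos_right hlt hN'.le
      omega
    have hall : ∀ j ∈ Finset.range N, r ≤ f (j + l) - f j := by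
      intro j hj
      have hj' := Finset.mem_range.1 hj
      have := hbal i j hi (by omega)
      linarith
    have hsum := Finset.sum_le_sum hall
    rw [Finset.sum_sub_distrib, sum_shift f N Y l (fun i hi => h1 i (by omega))] at hsum
    simp only [Finset.sum_const, Finset.card_range, nsmul_eq_mul] at hsum
    linarith
  have hsum : ∑ i ∈ Finset.range N, (N * (f (2 * N + i + l) - f (2 * N + i)) - Y * l) ≤
      ∑ i ∈ Finset.range N, g := by
    refine Finset.sum_le_sum fun i hi => key _ ?_
    have := Finset.mem_range.1 hi
    omega
  obtain ⟨m, rfl⟩ := Nat.exists_eq_add_of_le hNl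
  have e1 : ∑ i ∈ Finset.range N, f (2 * N + i + (N + m)) =
      ∑ i ∈ Finset.range N, f (3 * N + i) + m * Y := by
    rw [← sum_shift (fun i => f (3 * N + i)) N Y m (fun i hi => by
      have := h2 i (by omega)
      rwa [add_assoc] at this)]
    exact Finset.sum_congr rfl fun i _ => by congr 1; ring
  have e2 : ∑ i ∈ Finset.range N, f (2 * N + i) = ∑ i ∈ Finset.range N, f i + 2 * N * Y := by
    have : ∀ i ∈ Finset.range N, f (2 * N + i) = f i + 2 * Y := by
      intro i hi
      have hi' := Finset.mem_range.1 hi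
      have a := h1 i (by omega)
      have b := h1 (i + N) (by omega)
      rw [show 2 * N + i = i + N + N by ring]
      linarith
    rw [Finset.sum_congr rfl this, Finset.sum_add_distrib]
    simp; ring
  rw [Finset.sum_sub_distrib, ← Finset.mul_sum, Finset.sum_sub_distrib, e1, e2] at hsum
  simp only [Finset.sum_const, Finset.card_range, nsmul_eq_mul] at hsum
  push_cast at hsum
  nlinarith

/-- There is a length in `[N, 2N)` whose product with `Y` is `-gcd (N, Y)` modulo `N`. -/
lemma exists_length (N : ℕ) (Y : ℤ) (hN : 0 < N) :
    ∃ l : ℕ, N ≤ l ∧ l < 2 * N ∧ (N : ℤ) ∣ Y * l + Int.gcd N Y := by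
  have hN' : (0 : ℤ) < N := by exact_mod_cast hN
  set u := -Int.gcdB N Y with hu
  have h0 := Int.emod_nonneg u hN'.ne'
  have h1 := Int.emod_lt_of_pos u hN'
  refine ⟨(u % N).toNat + N, by omega, by omega, ?_⟩
  have hb := Int.gcd_eq_gcd_ab N Y
  have hd := Int.emod_add_mul_ediv u N
  refine ⟨Y - Y * (u / N) + Int.gcdA N Y, ?_⟩
  push_cast
  rw [Int.toNat_of_nonneg h0, hb]
  have : u % N = u - N * (u / N) := by linarith
  rw [this, hu]
  ring

lemma BalancedWord.take_le {W : List Bool} (h : BalancedWord W) (l i j : ℕ)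
    (hi : i + l ≤ W.length) (hj : j + l ≤ W.length) :
    ((W.take (i + l)).count true : ℤ) - (W.take i).count true ≤
      (W.take (j + l)).count true - (W.take j).count true + 1 := by
  have hinf : ∀ i, (W.drop i).take l <:+: W := fun i =>
    (List.take_prefix _ _).isInfix.trans (List.drop_suffix _ _).isInfix
  have hlen : ∀ i, i + l ≤ W.length → ((W.drop i).take l).length = l := by
    intro i hi; simp; omega
  have hcount : ∀ i, (W.take (i + l)).count true =
      (W.take i).count true + ((W.drop i).take l).count true := by
    intro i; rw [List.take_add, List.count_append]
  have := h _ _ (hinf i) (hinf j) ((hlen i hi).trans (hlen j hj).symm)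
  rw [hcount i, hcount j]; push_cast; omega

/-- Words `U`, `V` of the same length with the same number of `true`s, such that `U³V³` is
balanced, have prefix sums that differ by at most the gcd of length and number of `true`s. -/
lemma prefSum_sub_le (U V : List Bool) (hlen : V.length = U.length)
    (hcount : V.count true = U.count true) (hN : 0 < U.length)
    (h : BalancedWord (wpow 3 U ++ wpow 3 V)) :
    |prefSum V - prefSum U| ≤ Int.gcd U.length (U.count true : ℤ) := by
  set N := U.length with hNdef
  set Y : ℤ := (U.count true : ℤ) with hY
  set W := wpow 3 U ++ wpow 3 V with hW
  set f : ℕ → ℤ := fun i => ((W.take i).count true : ℤ) with hf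
  have hWl : W.length = 6 * N := by
    rw [hW, List.length_append, wpow_length, wpow_length, hlen]; ring
  have hUU : ∀ R : List Bool, ∀ i, (((U ++ R).take (i + N)).count true : ℤ) =
      (R.take i).count true + Y := by
    intro R i
    rw [add_comm i N, hNdef, List.take_length_add_append, List.count_append]
    push_cast; rw [hY]; ring
  have hVV : ∀ R : List Bool, ∀ i, (((V ++ R).take (i + N)).count true : ℤ) =
      (R.take i).count true + Y := by
    intro R i
    rw [add_comm i N, ← hlen, List.take_length_add_append, List.count_append, hcount]
    push_cast; rw [hY]; ring
  have hW1 : W = U ++ (U ++ (U ++ (V ++ (V ++ V)))) := by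
    simp [hW, wpow, List.replicate]
  have h3 : ∀ i, f (3 * N + i) = (((V ++ (V ++ V)).take i).count true : ℤ) + 3 * Y := by
    intro i
    simp only [hf]
    rw [show 3 * N + i = i + N + N + N by ring, hW1, hUU, hUU, hUU]; ring
  have h1 : ∀ i ≤ 2 * N, f (i + N) = f i + Y := by
    intro i hi
    simp only [hf]
    rw [hW1, hUU]
    have e1 : (U ++ (U ++ (V ++ (V ++ V)))).take i = (U ++ U).take i := by
      rw [← List.append_assoc, List.take_append_of_le_length]
      simp; omega
    have e2 : (U ++ (U ++ (U ++ (V ++ (V ++ V))))).take i = (U ++ U).take i := by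
      rw [← List.append_assoc, List.take_append_of_le_length]
      simp; omega
    rw [e1, e2]
  have h2 : ∀ i < 2 * N, f (3 * N + i + N) = f (3 * N + i) + Y := by
    intro i hi
    rw [add_assoc, h3, h3, hVV]
    have e1 : (V ++ (V ++ V)).take i = (V ++ V).take i := by
      rw [← List.append_assoc, List.take_append_of_le_length]
      simp; omega
    rw [e1]; ring
  have sV : ∑ i ∈ Finset.range N, f (3 * N + i) = prefSum V + 3 * N * Y := by
    have : ∀ i ∈ Finset.range N, f (3 * N + i) = ((V.take i).count true : ℤ) + 3 * Y := by
      intro i hi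
      have hi' := Finset.mem_range.1 hi
      rw [h3, List.take_append_of_le_length (by omega)]
    rw [Finset.sum_congr rfl this, Finset.sum_add_distrib, prefSum, hlen]
    simp; ring
  have sU : ∑ i ∈ Finset.range N, f i = prefSum U := by
    refine Finset.sum_congr rfl fun i hi => ?_
    have hi' := Finset.mem_range.1 hi
    simp only [hf]
    rw [hW1, List.take_append_of_le_length (by omega)]
  have hN' : (N : ℤ) ≠ 0 := by exact_mod_cast hN.ne'
  have hg : (0 : ℤ) < Int.gcd N Y := by exact_mod_cast Int.gcd_pos_of_ne_zero_left _ hN'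
  rw [abs_le]
  constructor
  · -- Replacing `f`, `Y` by their negatives turns the upper bound into the lower one.
    obtain ⟨l, hl1, hl2, hl3⟩ := exists_length N (-Y) hN
    rw [Int.gcd_neg] at hl3
    have := defect_bound (fun i => -f i) N (-Y) _ l hN hg hl1 hl2 hl3
      (fun i j hi hj => by
        have := h.take_le l j i (by omega) (by omega)
        simp only [hf]; linarith)
      (fun i hi => by have := h1 i hi; linarith)
      (fun i hi => by have := h2 i hi; linarith)
    simp only [Finset.sum_neg_distrib] at this
    rw [sU, sV] at this
    linarith
  · obtain ⟨l, hl1, hl2, hl3⟩ := exists_length N Y hN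
    have := defect_bound f N Y _ l hN hg hl1 hl2 hl3
      (fun i j hi hj => h.take_le l i j (by omega) (by omega)) h1 h2
    rw [sU, sV] at this
    linarith

/-! ### Binary codings of 3iet words -/

/-- The binary substitution `A ↦ 0`, `C ↦ 1` and `B ↦ 01` (for `t = false`) or `B ↦ 10`
(for `t = true`), with `0 = false` and `1 = true`. -/
def binSub (t : Bool) : Letter → List Bool
  | Letter.A => [false]
  | Letter.B => [t, !t]
  | Letter.C => [true]

/-- The displacement of a walk that reads a binary word, moving by `ρ` at each `false` and
by `-σ` at each `true`. -/
def disp (ρ σ : ℝ) (W : List Bool) : ℝ := ρ * W.count false - σ * W.count true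

lemma disp_append (ρ σ : ℝ) (P Q : List Bool) :
    disp ρ σ (P ++ Q) = disp ρ σ P + disp ρ σ Q := by
  simp [disp]; ring

/-- A binary word whose walk stays in a half-open interval of length `ρ + σ` is balanced. -/
lemma balanced_of_disp {ρ σ : ℝ} (W : List Bool) (hpos : 0 < ρ + σ)
    (h : ∀ P Q, P <+: W → Q <+: W → disp ρ σ P - disp ρ σ Q < ρ + σ) : BalancedWord W := by
  have key : ∀ U, U <:+: W → |disp ρ σ U| < ρ + σ := by
    rintro U ⟨P, S, hW⟩
    have h1 : P <+: W := ⟨U ++ S, by rw [← hW, List.append_assoc]⟩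
    have h2 : P ++ U <+: W := ⟨S, hW⟩
    have h3 := h _ _ h1 h2
    have h4 := h _ _ h2 h1
    rw [disp_append] at h3 h4
    rw [abs_lt]; constructor <;> linarith
  intro U V hU hV hl
  have h1 := abs_lt.1 (key U hU)
  have h2 := abs_lt.1 (key V hV)
  have e : ∀ U : List Bool, (U.count false : ℝ) = U.length - U.count true := by
    intro U
    have : U.length = U.count true + U.count false := by
      induction U with
      | nil => simp
      | cons x U ih => cases x <;> simp <;> omega
    rw [this]; push_cast; ring
  simp only [disp, e, hl] at h1 h2
  have h3 : (ρ + σ) * ((U.count true : ℝ) - V.count true) < (ρ + σ) * 2 := by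
    nlinarith [h1.1, h2.2]
  have h4 := lt_of_mul_lt_mul_left h3 hpos.le
  have h5 : (U.count true : ℝ) < V.count true + 2 := by linarith
  have h6 : U.count true < V.count true + 2 := by exact_mod_cast h5
  omega

/-- If reading the binary code of each point of `D` leads from `y` to `T y` inside `I`, then
the walk along the binary code of a whole `T`-orbit stays inside `I`. -/
lemma walk_mem (t : Bool) (ρ σ : ℝ) (T : ℝ → ℝ) (code : ℝ → Letter) (D I : Set ℝ)
    (hstep : ∀ y ∈ D, T y ∈ D ∧ T y = y + disp ρ σ (binSub t (code y)) ∧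
      ∀ P, P <+: binSub t (code y) → y + disp ρ σ P ∈ I) (n : ℕ) :
    ∀ y ∈ D, ∀ P, P <+: ((List.range n).map (fun i => code (T^[i] y))).flatMap (binSub t) →
      y + disp ρ σ P ∈ I := by
  induction n with
  | zero =>
    intro y hy P hP
    simp only [List.range_zero, List.map_nil, List.flatMap_nil, List.prefix_nil] at hP
    subst hP
    exact (hstep y hy).2.2 [] (List.nil_prefix)
  | succ n ih =>
    intro y hy P hP
    obtain ⟨hD, hT, hI⟩ := hstep y hy
    rw [List.range_succ_eq_map, List.map_cons, List.flatMap_cons, List.map_map] at hP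
    simp only [Function.iterate_zero, id_eq] at hP
    rcases List.prefix_or_prefix_of_prefix hP (List.prefix_append _ _) with h | ⟨Q, rfl⟩
    · exact hI P h
    · rw [List.prefix_append_right_inj] at hP
      have := ih (T y) hD Q hP
      rw [hT] at this
      rw [disp_append, ← add_assoc]; exact this

lemma forall_prefix_one (a : Bool) (Q : List Bool → Prop) (h0 : Q []) (h1 : Q [a]) :
    ∀ P, P <+: [a] → Q P := by
  intro P hP
  rw [List.prefix_cons_iff] at hP
  rcases hP with rfl | ⟨R, rfl, hR⟩
  · exact h0
  · rw [List.prefix_nil] at hR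
    subst hR; exact h1

lemma forall_prefix_two (a b : Bool) (Q : List Bool → Prop) (h0 : Q []) (h1 : Q [a])
    (h2 : Q [a, b]) : ∀ P, P <+: [a, b] → Q P := by
  intro P hP
  rw [List.prefix_cons_iff] at hP
  rcases hP with rfl | ⟨R, rfl, hR⟩
  · exact h0
  · exact forall_prefix_one b (fun R => Q (a :: R)) h1 h2 R hR

/-- The left endpoint of the interval of length `α + 2β + γ` in which the walk of the binary
coding takes place. -/
def walkStart (t : Bool) (β : ℝ) : ℝ := if t then -β else 0

lemma step_left (t : Bool) {α β γ y : ℝ} (hα : 0 < α) (hβ : 0 < β) (hγ : 0 < γ)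
    (hy : y ∈ Set.Ico 0 (α + β + γ)) :
    Tleft α β γ y ∈ Set.Ico 0 (α + β + γ) ∧
      Tleft α β γ y = y + disp (β + γ) (α + β) (binSub t (codeLeft α β y)) ∧
      ∀ P, P <+: binSub t (codeLeft α β y) → y + disp (β + γ) (α + β) P ∈
        Set.Ico (walkStart t β) (walkStart t β + (β + γ + (α + β))) := by
  obtain ⟨h0, h1⟩ := hy
  unfold Tleft codeLeft
  split_ifs with c1 c2
  · refine ⟨⟨by linarith, by linarith⟩, ?_, ?_⟩
    · simp [binSub, disp]; ring
    · apply forall_prefix_one <;> cases t <;> simp [disp, walkStart] <;> constructor <;> linarith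
  · refine ⟨⟨by linarith, by linarith⟩, ?_, ?_⟩
    · cases t <;> simp [binSub, disp] <;> ring
    · apply forall_prefix_two <;> cases t <;> simp [disp, walkStart] <;> constructor <;> linarith
  · refine ⟨⟨by linarith, by linarith⟩, ?_, ?_⟩
    · simp [binSub, disp]; ring
    · apply forall_prefix_one <;> cases t <;> simp [disp, walkStart] <;> constructor <;> linarith

lemma step_right (t : Bool) {α β γ y : ℝ} (hα : 0 < α) (hβ : 0 < β) (hγ : 0 < γ)
    (hy : y ∈ Set.Ioc 0 (α + β + γ)) :
    Tright α β γ y ∈ Set.Ioc 0 (α + β + γ) ∧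
      Tright α β γ y = y + disp (β + γ) (α + β) (binSub t (codeRight α β y)) ∧
      ∀ P, P <+: binSub t (codeRight α β y) → y + disp (β + γ) (α + β) P ∈
        Set.Ioc (walkStart t β) (walkStart t β + (β + γ + (α + β))) := by
  obtain ⟨h0, h1⟩ := hy
  unfold Tright codeRight
  split_ifs with c1 c2
  · refine ⟨⟨by linarith, by linarith⟩, ?_, ?_⟩
    · simp [binSub, disp]; ring
    · apply forall_prefix_one <;> cases t <;> simp [disp, walkStart] <;> constructor <;> linarith
  · refine ⟨⟨by linarith, by linarith⟩, ?_, ?_⟩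
    · cases t <;> simp [binSub, disp] <;> ring
    · apply forall_prefix_two <;> cases t <;> simp [disp, walkStart] <;> constructor <;> linarith
  · refine ⟨⟨by linarith, by linarith⟩, ?_, ?_⟩
    · simp [binSub, disp]; ring
    · apply forall_prefix_one <;> cases t <;> simp [disp, walkStart] <;> constructor <;> linarith

lemma balanced_of_3iet (v : ℤ → Letter) (hv : Is3ietWord v) (t : Bool) (n : ℕ) :
    BalancedWord (((List.range n).map (fun i : ℕ => v i)).flatMap (binSub t)) := by
  obtain ⟨α, β, γ, x₀, hα, hβ, hγ, -, h⟩ := hv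
  rcases h with ⟨hx, rfl⟩ | ⟨hx, rfl⟩
  · have hI := walk_mem t (β + γ) (α + β) (Tleft α β γ) (codeLeft α β) _ _
      (fun y hy => step_left t hα hβ hγ hy) n x₀ hx
    refine balanced_of_disp (ρ := β + γ) (σ := α + β) _ (by linarith) fun P Q hP hQ => ?_
    have h1 := hI P hP
    have h2 := hI Q hQ
    linarith [h1.2, h2.1]
  · have hI := walk_mem t (β + γ) (α + β) (Tright α β γ) (codeRight α β) _ _
      (fun y hy => step_right t hα hβ hγ hy) n x₀ hx
    refine balanced_of_disp (ρ := β + γ) (σ := α + β) _ (by linarith) fun P Q hP hQ => ?_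
    have h1 := hI P hP
    have h2 := hI Q hQ
    linarith [h1.2, h2.1]

/-! ### Images of biinfinite words -/

lemma exists_imageWord (φ : Morph) (hne : ∀ a, φ a ≠ []) (u : ℤ → Letter) :
    ∃ v, IsImageWord φ u v := by
  obtain ⟨c, hc⟩ : ∃ c : ℤ → ℤ, c = fun m => ∑ i ∈ Finset.Ico 0 m, ((φ (u i)).length : ℤ) -
      ∑ i ∈ Finset.Ico m 0, ((φ (u i)).length : ℤ) := ⟨_, rfl⟩
  have hc0 : c 0 = 0 := by simp [hc]
  have hstep : ∀ m, c (m + 1) = c m + (φ (u m)).length := by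
    intro m
    rw [hc]
    rcases le_or_gt 0 m with hm | hm
    · have e : Finset.Ico 0 (m + 1) = insert m (Finset.Ico 0 m) := by
        ext x; simp only [Finset.mem_Ico, Finset.mem_insert]; omega
      simp only [e]
      rw [Finset.sum_insert (by simp), Finset.Ico_eq_empty (by omega : ¬ m + 1 < 0),
        Finset.Ico_eq_empty (by omega : ¬ m < 0)]
      ring
    · have e : Finset.Ico m 0 = insert m (Finset.Ico (m + 1) 0) := by
        ext x; simp only [Finset.mem_Ico, Finset.mem_insert]; omega
      simp only [e]
      rw [Finset.sum_insert (by simp), Finset.Ico_eq_empty (by omega : ¬ 0 < m + 1),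
        Finset.Ico_eq_empty (by omega : ¬ 0 < m)]
      ring
  have hlen : ∀ m, 0 < (φ (u m)).length := fun m => List.length_pos_iff.2 (hne _)
  have hmono : StrictMono c := strictMono_int_of_lt_succ fun m => by
    have := hlen m
    rw [hstep]; omega
  -- Distinct blocks occupy disjoint sets of positions.
  have hdisj : ∀ (m m' : ℤ) (i i' : ℕ), i < (φ (u m)).length →
      c m + i = c m' + i' → m' ≤ m := by
    intro m m' i i' hi h
    by_contra hlt
    have := hmono.monotone (show m + 1 ≤ m' by omega)
    rw [hstep] at this
    omega
  have hex : ∀ n : ℤ, ∃ x : Letter, ∀ (m : ℤ) (i : ℕ) (h : i < (φ (u m)).length),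
      c m + (i : ℤ) = n → x = (φ (u m)).get ⟨i, h⟩ := by
    intro n
    by_cases hn : ∃ (m : ℤ) (i : ℕ) (_ : i < (φ (u m)).length), c m + (i : ℤ) = n
    · obtain ⟨m, i, h, rfl⟩ := hn
      refine ⟨(φ (u m)).get ⟨i, h⟩, fun m' i' h' he => ?_⟩
      obtain rfl : m' = m := le_antisymm (hdisj _ _ _ _ h he.symm) (hdisj _ _ _ _ h' he)
      obtain rfl : i' = i := by omega
      rfl
    · exact ⟨Letter.A, fun m i h he => (hn ⟨m, i, h, he⟩).elim⟩
  choose v hv using hex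
  exact ⟨v, c, hc0, hstep, fun m i h => hv _ m i h rfl⟩

lemma imageWord_range {φ : Morph} {u v : ℤ → Letter} (h : IsImageWord φ u v) (n : ℕ) :
    ∃ N : ℕ, (List.range N).map (fun i : ℕ => v i) =
      ((List.range n).map (fun i : ℕ => u i)).flatMap φ := by
  obtain ⟨c, hc0, hstep, hv⟩ := h
  suffices ∃ N : ℕ, (N : ℤ) = c n ∧ (List.range N).map (fun i : ℕ => v i) =
      ((List.range n).map (fun i : ℕ => u i)).flatMap φ by
    obtain ⟨N, -, h⟩ := this; exact ⟨N, h⟩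
  induction n with
  | zero => exact ⟨0, by simp [hc0], by simp⟩
  | succ n ih =>
    obtain ⟨N, hN, hw⟩ := ih
    refine ⟨N + (φ (u n)).length, by push_cast; rw [hstep, hN], ?_⟩
    rw [List.range_add, List.range_succ, List.map_append, List.map_append,
      List.flatMap_append, hw]
    congr 1
    simp only [List.map_map, List.map_cons, List.map_nil, List.flatMap_cons, List.flatMap_nil,
      List.append_nil]
    refine List.ext_getElem (by simp) fun i h1 h2 => ?_
    have := hv n i h2
    simp only [List.getElem_map, List.getElem_range, Function.comp]
    push_cast
    rw [hN, this]; simp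

/-- The binary codings of the images under `φ` of factors of 3iet words are balanced. -/
lemma balanced_image {φ : Morph} (hφ : Preserves3iet φ) {u : ℤ → Letter} (hu : Is3ietWord u)
    (t : Bool) (n : ℕ) :
    BalancedWord ((((List.range n).map (fun i : ℕ => u i)).flatMap φ).flatMap (binSub t)) := by
  obtain ⟨v, hv⟩ := exists_imageWord φ hφ.1 u
  obtain ⟨N, hN⟩ := imageWord_range hv n
  rw [← hN]
  exact balanced_of_3iet v (hφ.2 u v hu hv) t N

/-! ### 3iet words containing high powers of two blocks -/

/-- `Codes α β γ x w y` says that the orbit of `x` under the left-closed transformation starts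
with the code `w`, after which it is at `y`. -/
def Codes (α β γ : ℝ) : ℝ → List Letter → ℝ → Prop
  | x, [], y => x = y
  | x, l :: w, y => codeLeft α β x = l ∧ Codes α β γ (Tleft α β γ x) w y

lemma Codes.append {α β γ : ℝ} {v w : List Letter} {x y z : ℝ} (h1 : Codes α β γ x v y)
    (h2 : Codes α β γ y w z) : Codes α β γ x (v ++ w) z := by
  induction v generalizing x with
  | nil =>
    obtain rfl : x = y := h1
    exact h2
  | cons l v ih => exact ⟨h1.1, ih h1.2⟩

lemma Codes.map_range {α β γ : ℝ} {w : List Letter} {x y : ℝ} (h : Codes α β γ x w y) :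
    (List.range w.length).map (fun i : ℕ => uLeft α β γ x i) = w := by
  have e : ∀ x, (fun i : ℕ => uLeft α β γ x i) =
      fun i : ℕ => codeLeft α β ((Tleft α β γ)^[i] x) := fun x => rfl
  induction w generalizing x with
  | nil => rfl
  | cons l w ih =>
    have := ih h.2
    rw [e] at this ⊢
    rw [List.length_cons, List.range_succ_eq_map, List.map_cons, List.map_map]
    exact congrArg₂ List.cons h.1 this

/-- If reading `w` moves every point of `[s, s + kδ)` by `δ`, then `w ^ k` is read from `s`. -/
lemma Codes.wpow {α β γ δ : ℝ} {w : List Letter} (k : ℕ) (s : ℝ) (hδ : 0 < δ)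
    (h : ∀ y, s ≤ y → y < s + k * δ → Codes α β γ y w (y + δ)) :
    Codes α β γ s (wpow k w) (s + k * δ) := by
  induction k generalizing s with
  | zero => rw [wpow_zero]; simp [Codes]
  | succ k ih =>
    rw [wpow_succ]
    have hk : (0 : ℝ) ≤ k * δ := by positivity
    push_cast at h ⊢
    refine Codes.append (h s le_rfl (by linarith)) ?_
    rw [show s + (k + 1) * δ = s + δ + k * δ by ring]
    exact ih _ fun y hy1 hy2 => h y (by linarith) (by linarith)

lemma codes_C {γ y : ℝ} (q : ℕ) (hy : 0 ≤ y) :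
    Codes 1 1 γ (y + 2 * q) (List.replicate q Letter.C) y := by
  induction q with
  | zero => simp [Codes]
  | succ q ih =>
    have hq : (0 : ℝ) ≤ q := q.cast_nonneg
    have h1 : ¬ y + 2 * (q + 1) < 1 := by linarith
    have h2 : ¬ y + 2 * (q + 1) < 1 + 1 := by linarith
    rw [List.replicate_succ]
    push_cast
    refine ⟨by simp only [codeLeft, if_neg h1, if_neg h2], ?_⟩
    rw [show Tleft 1 1 γ (y + 2 * (q + 1)) = y + 2 * q by
      simp only [Tleft, if_neg h1, if_neg h2]; ring]
    exact ih

/-- For the parameters `(1, 1, 2q + 1 + δ)`, the block `A C^(q+1)` moves points of `[0, 1)`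
by `δ`. -/
lemma codes_AC {δ y : ℝ} (q : ℕ) (hδ : 0 < δ) (h0 : 0 ≤ y) (h1 : y < 1) :
    Codes 1 1 (2 * q + 1 + δ) y (Letter.A :: List.replicate (q + 1) Letter.C) (y + δ) := by
  refine ⟨by simp only [codeLeft, if_pos h1], ?_⟩
  rw [show Tleft 1 1 (2 * q + 1 + δ) y = y + δ + 2 * (q + 1 : ℕ) by
    simp only [Tleft, if_pos h1]; push_cast; ring]
  exact codes_C _ (by linarith)

/-- For the parameters `(1, 1, 2q + 1 + δ)`, the block `B C^q` moves points of `[1, 2)` by `δ`. -/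
lemma codes_BC {δ y : ℝ} (q : ℕ) (hδ : 0 < δ) (h0 : 1 ≤ y) (h1 : y < 2) :
    Codes 1 1 (2 * q + 1 + δ) y (Letter.B :: List.replicate q Letter.C) (y + δ) := by
  have c1 : ¬ y < 1 := by linarith
  have c2 : y < 1 + 1 := by linarith
  refine ⟨by simp only [codeLeft, if_neg c1, if_pos c2], ?_⟩
  rw [show Tleft 1 1 (2 * q + 1 + δ) y = y + δ + 2 * q by
    simp only [Tleft, if_neg c1, if_pos c2]; ring]
  exact codes_C _ (by linarith)

/-- For the parameters `(1, 1, 2q + 1 + δ)`, the block `C A C^q` moves points of `[2, 3)`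
by `δ`. -/
lemma codes_CAC {δ y : ℝ} (q : ℕ) (hδ : 0 < δ) (h0 : 2 ≤ y) (h1 : y < 3) :
    Codes 1 1 (2 * q + 1 + δ) y (Letter.C :: Letter.A :: List.replicate q Letter.C)
      (y + δ) := by
  have c1 : ¬ y < 1 := by linarith
  have c2 : ¬ y < 1 + 1 := by linarith
  have c3 : y - 1 - 1 < 1 := by linarith
  have e : Tleft 1 1 (2 * q + 1 + δ) y = y - 1 - 1 := by
    simp only [Tleft, if_neg c1, if_neg c2]
  refine ⟨by simp only [codeLeft, if_neg c1, if_neg c2], ?_⟩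
  rw [e]
  refine ⟨by simp only [codeLeft, if_pos c3], ?_⟩
  rw [show Tleft 1 1 (2 * q + 1 + δ) (y - 1 - 1) = y + δ + 2 * q by
    simp only [Tleft, if_pos c3]; ring]
  exact codes_C _ (by linarith)

lemma exists_small_irrational (k : ℕ) : ∃ δ : ℝ, 0 < δ ∧ k * δ < 1 ∧ Irrational δ := by
  refine ⟨√2 / (2 * (k + 1) : ℕ), by positivity, ?_, irrational_sqrt_two.div_natCast (by omega)⟩
  have h2 : √2 < 2 := by
    rw [Real.sqrt_lt' (by norm_num)]; norm_num
  have hk : (0 : ℝ) ≤ k := k.cast_nonneg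
  push_cast
  rw [← mul_div_assoc, div_lt_one (by positivity)]
  nlinarith

lemma is3iet_of_irrational {δ x₀ : ℝ} (q : ℕ) (hδ : 0 < δ) (hirr : Irrational δ)
    (h0 : 0 ≤ x₀) (h1 : x₀ < 2) : Is3ietWord (uLeft 1 1 (2 * q + 1 + δ) x₀) := by
  refine ⟨1, 1, 2 * q + 1 + δ, x₀, one_pos, one_pos, by positivity, ?_, Or.inl ⟨⟨h0, ?_⟩, rfl⟩⟩
  · rw [LinearIndependent.pair_iff]
    intro s r h
    simp only [Rat.smul_def] at h
    have hr : r = 0 := by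
      by_contra hr
      apply hirr
      refine ⟨-(2 * s) / r - 2 * q - 2, ?_⟩
      have : (r : ℝ) ≠ 0 := by exact_mod_cast hr
      push_cast
      field_simp
      linarith
    subst hr
    have : (s : ℝ) = 0 := by
      push_cast at h; linarith
    exact ⟨by exact_mod_cast this, rfl⟩
  · have : (0 : ℝ) ≤ q := q.cast_nonneg
    linarith

/-- The binary coding of the image of `w` under `φ`. -/
def binImage (φ : Morph) (t : Bool) (w : List Letter) : List Bool :=
  (w.flatMap φ).flatMap (binSub t)

lemma binImage_append (φ : Morph) (t : Bool) (v w : List Letter) :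
    binImage φ t (v ++ w) = binImage φ t v ++ binImage φ t w := by
  simp [binImage, List.flatMap_append]

lemma binImage_wpow (φ : Morph) (t : Bool) (k : ℕ) (w : List Letter) :
    binImage φ t (wpow k w) = wpow k (binImage φ t w) := by
  simp [binImage, wpow_flatMap]

lemma balanced_of_codes {φ : Morph} (hφ : Preserves3iet φ) (t : Bool) (q : ℕ) {δ x y : ℝ}
    (hδ : 0 < δ) (hirr : Irrational δ) (h0 : 0 ≤ x) (h1 : x < 2) {w : List Letter}
    (h : Codes 1 1 (2 * q + 1 + δ) x w y) : BalancedWord (binImage φ t w) := by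
  have := balanced_image hφ (is3iet_of_irrational q hδ hirr h0 h1) t w.length
  rwa [h.map_range] at this

/-- Balance of the binary image of `(B C^q)^k (C A C^q)^k`, which is a factor of a 3iet word. -/
lemma balanced_BC_CAC {φ : Morph} (hφ : Preserves3iet φ) (t : Bool) (q k : ℕ) :
    BalancedWord (wpow k (binImage φ t (Letter.B :: List.replicate q Letter.C)) ++
      wpow k (binImage φ t (Letter.C :: Letter.A :: List.replicate q Letter.C))) := by
  cases k with
  | zero =>
    intro U V hU hV hl
    simp [wpow_zero] at hU hV
    simp [hU, hV]
  | succ k =>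
  obtain ⟨δ, hδ, hk, hirr⟩ := exists_small_irrational (k + 1)
  have hk0 : 0 < ((k + 1 : ℕ) : ℝ) * δ := by positivity
  rw [← binImage_wpow, ← binImage_wpow, ← binImage_append]
  have c1 := Codes.wpow (k + 1) (2 - (k + 1 : ℕ) * δ) hδ
    (fun y h1 h2 => codes_BC (y := y) q hδ (by linarith) (by linarith))
  have c2 := Codes.wpow (k + 1) 2 hδ
    (fun y h1 h2 => codes_CAC (y := y) q hδ (by linarith) (by linarith))
  rw [sub_add_cancel] at c1
  exact balanced_of_codes hφ t q hδ hirr (by linarith) (by linarith) (c1.append c2)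

/-- Balance of the binary image of `(A C^(q+1))^k (B C^q)^k`, which is a factor of a 3iet word. -/
lemma balanced_AC_BC {φ : Morph} (hφ : Preserves3iet φ) (t : Bool) (q k : ℕ) :
    BalancedWord (wpow k (binImage φ t (Letter.A :: List.replicate (q + 1) Letter.C)) ++
      wpow k (binImage φ t (Letter.B :: List.replicate q Letter.C))) := by
  obtain ⟨δ, hδ, hk, hirr⟩ := exists_small_irrational k
  have hk0 : 0 ≤ (k : ℝ) * δ := by positivity
  rw [← binImage_wpow, ← binImage_wpow, ← binImage_append]
  have c1 := Codes.wpow k (1 - k * δ) hδ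
    (fun y h1 h2 => codes_AC (y := y) q hδ (by linarith) (by linarith))
  have c2 := Codes.wpow k 1 hδ
    (fun y h1 h2 => codes_BC (y := y) q hδ (by linarith) (by linarith))
  rw [sub_add_cancel] at c1
  exact balanced_of_codes hφ t q hδ hirr (by linarith) (by linarith) (c1.append c2)

/-! ### Parikh data of the binary images -/

lemma bin_count (t : Bool) (w : List Letter) :
    ((w.flatMap (binSub t)).count true : ℤ) = w.count Letter.B + w.count Letter.C := by
  induction w with
  | nil => simp
  | cons l w ih =>
    rw [List.flatMap_cons, List.count_append]
    push_cast
    rw [ih]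
    cases l <;> cases t <;> simp [binSub] <;> ring

lemma bin_length (t : Bool) (w : List Letter) :
    ((w.flatMap (binSub t)).length : ℤ) =
      w.count Letter.A + 2 * w.count Letter.B + w.count Letter.C := by
  induction w with
  | nil => simp
  | cons l w ih =>
    rw [List.flatMap_cons, List.length_append]
    push_cast
    rw [ih]
    cases l <;> simp [binSub] <;> ring

/-- Exchanging `01` and `10` for one letter `B` changes the prefix sum by one. -/
lemma bin_prefSum (w : List Letter) :
    prefSum (w.flatMap (binSub true)) - prefSum (w.flatMap (binSub false)) =
      w.count Letter.B := by
  induction w with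
  | nil => simp [prefSum]
  | cons l w ih =>
    rw [List.flatMap_cons, List.flatMap_cons, prefSum_append, prefSum_append, bin_length,
      bin_length]
    cases l <;> simp [binSub, prefSum_cons] <;> linarith

/-- The first coordinate of the pair `L_l = (|φ(l)|_A + |φ(l)|_B, |φ(l)|_B + |φ(l)|_C)`, which
counts the zeros and ones in the binary image of the letter `l`. -/
def Lx (φ : Morph) (l : Letter) : ℤ := (φ l).count Letter.A + (φ l).count Letter.B

/-- The second coordinate of the pair `L_l`; see `Lx`. -/
def Ly (φ : Morph) (l : Letter) : ℤ := (φ l).count Letter.B + (φ l).count Letter.C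

/-- The number of letters `B` in the image of `l`. -/
def nB (φ : Morph) (l : Letter) : ℤ := (φ l).count Letter.B

/-- The determinant of the pair of vectors `L_A`, `L_C`. -/
def lam (φ : Morph) : ℤ := Lx φ Letter.A * Ly φ Letter.C - Lx φ Letter.C * Ly φ Letter.A

/-- The excess of letters `B` in `φ(B)` compared to `φ(AC)`. -/
def exc (φ : Morph) : ℤ := nB φ Letter.B - nB φ Letter.A - nB φ Letter.C

lemma binImage_nil (φ : Morph) (t : Bool) : binImage φ t [] = [] := rfl

lemma binImage_cons (φ : Morph) (t : Bool) (l : Letter) (w : List Letter) :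
    binImage φ t (l :: w) = (φ l).flatMap (binSub t) ++ binImage φ t w := by
  simp [binImage, List.flatMap_append]

lemma binImage_length (φ : Morph) (t : Bool) (q : ℕ) (l : Letter) :
    ((binImage φ t (l :: List.replicate q Letter.C)).length : ℤ) =
      Lx φ l + Ly φ l + q * (Lx φ Letter.C + Ly φ Letter.C) := by
  induction q generalizing l with
  | zero =>
    rw [List.replicate_zero, binImage_cons, binImage_nil, List.append_nil, bin_length, Lx, Ly]
    push_cast; ring
  | succ q ih =>
    rw [binImage_cons, List.length_append, List.replicate_succ]
    push_cast
    rw [ih, bin_length, Lx, Ly, Lx, Ly]; ring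

lemma binImage_count (φ : Morph) (t : Bool) (q : ℕ) (l : Letter) :
    ((binImage φ t (l :: List.replicate q Letter.C)).count true : ℤ) =
      Ly φ l + q * Ly φ Letter.C := by
  induction q generalizing l with
  | zero => simp [binImage_cons, binImage_nil, bin_count, Ly]
  | succ q ih =>
    rw [binImage_cons, List.count_append, List.replicate_succ]
    push_cast
    rw [ih, bin_count, Ly, Ly]; ring

lemma binImage_prefSum (φ : Morph) (q : ℕ) (l : Letter) :
    prefSum (binImage φ true (l :: List.replicate q Letter.C)) -
      prefSum (binImage φ false (l :: List.replicate q Letter.C)) =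
      nB φ l + q * nB φ Letter.C := by
  have h : ∀ l, (((l :: List.replicate q Letter.C).flatMap φ).count Letter.B : ℤ) =
      nB φ l + q * nB φ Letter.C := by
    induction q with
    | zero => simp [nB]
    | succ q ih =>
      intro l
      rw [List.flatMap_cons, List.count_append, List.replicate_succ]
      push_cast
      rw [ih, nB, nB]; ring
  rw [binImage, binImage, bin_prefSum, h]

lemma binImage_AC (φ : Morph) (t : Bool) (q : ℕ) :
    binImage φ t (Letter.A :: List.replicate (q + 1) Letter.C) =
      binImage φ t (Letter.A :: List.replicate q Letter.C) ++
        binImage φ t (Letter.C :: List.replicate 0 Letter.C) := by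
  rw [← binImage_append, List.replicate_succ', List.cons_append]; rfl

lemma binImage_CA (φ : Morph) (t : Bool) (q : ℕ) :
    binImage φ t (Letter.C :: Letter.A :: List.replicate q Letter.C) =
      binImage φ t (Letter.C :: List.replicate 0 Letter.C) ++
        binImage φ t (Letter.A :: List.replicate q Letter.C) := by
  rw [← binImage_append]; rfl

/-- The vectors `L_B + q L_C` and `L_A + (q + 1) L_C` are parallel, because the corresponding
binary words have the same density of ones. -/
lemma det_eq_zero {φ : Morph} (hφ : Preserves3iet φ) (q : ℕ) :
    (Lx φ Letter.B + q * Lx φ Letter.C) * (Ly φ Letter.A + (q + 1) * Ly φ Letter.C) =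
      (Lx φ Letter.A + (q + 1) * Lx φ Letter.C) * (Ly φ Letter.B + q * Ly φ Letter.C) := by
  have h := slope_eq _ _ (balanced_AC_BC hφ true q)
  rw [binImage_length, binImage_length, binImage_count, binImage_count] at h
  push_cast at h
  linear_combination -h

lemma minors_eq {φ : Morph} (hφ : Preserves3iet φ) :
    Lx φ Letter.A * Ly φ Letter.B - Lx φ Letter.B * Ly φ Letter.A = lam φ ∧
      Lx φ Letter.B * Ly φ Letter.C - Lx φ Letter.C * Ly φ Letter.B = lam φ := by
  have h0 := det_eq_zero hφ 0
  have h1 := det_eq_zero hφ 1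
  push_cast at h0 h1
  unfold lam
  constructor
  · linear_combination h1 - 2 * h0
  · linear_combination h1 - h0

lemma Lx_add_Ly_pos {φ : Morph} (hφ : Preserves3iet φ) (l : Letter) : 0 < Lx φ l + Ly φ l := by
  have h := hφ.1 l
  unfold Lx Ly
  cases hl : φ l with
  | nil => exact (h hl).elim
  | cons x w => cases x <;> simp <;> positivity

/-- The arithmetic behind `lam_eq_gcd`: if `l` is a nonzero multiple of `g` and two distinct
integers lie within distance `g` of both `0` and `l`, then `l = ±g`. -/
lemma abs_eq_of_two_points {g l d e : ℤ} (hg : 0 < g) (hl : l ≠ 0) (hdvd : g ∣ l)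
    (hde : d - e ≠ 0) (hd : |d| ≤ g) (he : |e| ≤ g) (hd' : |l - d| ≤ g) (he' : |l - e| ≤ g) :
    |l| = g ∧ |d - e| ≤ g := by
  obtain ⟨m, rfl⟩ := hdvd
  rw [abs_le] at hd he hd' he'
  have hm : m ≠ 0 := by rintro rfl; simp at hl
  have hm1 : m ≤ 2 := by nlinarith
  have hm2 : -2 ≤ m := by nlinarith
  have : m = 2 ∨ m = 1 ∨ m = -1 ∨ m = -2 := by omega
  rcases this with rfl | rfl | rfl | rfl
  · exact (hde (by linarith)).elim
  · exact ⟨by rw [mul_one, abs_of_pos hg], abs_le.2 ⟨by linarith, by linarith⟩⟩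
  · exact ⟨by rw [mul_neg, mul_one, abs_neg, abs_of_pos hg],
      abs_le.2 ⟨by linarith, by linarith⟩⟩
  · exact (hde (by linarith)).elim

/-- If `lam` and `exc` do not vanish, then `|lam|` is the gcd of the coordinates of
`L_A + (q + 1) L_C` (of their sum and the second one, in fact). With `b` and `a`, `c` the binary
images of `B C^q` and of `A C^q`, `C`, the prefix sums of `ac`, `b` and of `b`, `ca` differ by at
most this gcd, the prefix sums of `ac` and `ca` differ by `lam`, and the two binary codings give
values of `prefSum b - prefSum (ac)` that differ by `exc`. -/
lemma lam_eq_gcd {φ : Morph} (hφ : Preserves3iet φ) (hlam : lam φ ≠ 0) (hexc : exc φ ≠ 0)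
    (hx : Lx φ Letter.B = Lx φ Letter.A + Lx φ Letter.C)
    (hy : Ly φ Letter.B = Ly φ Letter.A + Ly φ Letter.C) (q : ℕ) :
    ∃ g : ℤ, g ∣ Lx φ Letter.A + Ly φ Letter.A + (q + 1) * (Lx φ Letter.C + Ly φ Letter.C) ∧
      g ∣ Ly φ Letter.A + (q + 1) * Ly φ Letter.C ∧ |lam φ| = g ∧ |exc φ| ≤ g := by
  set N := Lx φ Letter.A + Ly φ Letter.A + (q + 1) * (Lx φ Letter.C + Ly φ Letter.C) with hN
  set Y := Ly φ Letter.A + (q + 1) * Ly φ Letter.C with hY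
  have hNpos : 0 < N := by
    have h1 := Lx_add_Ly_pos hφ Letter.A
    have h2 := Lx_add_Ly_pos hφ Letter.C
    have : 0 < (q + 1) * (Lx φ Letter.C + Ly φ Letter.C) := by positivity
    linarith
  refine ⟨Int.gcd N Y, Int.gcd_dvd_left .., Int.gcd_dvd_right .., ?_⟩
  have hg : (0 : ℤ) < Int.gcd N Y := by
    exact_mod_cast Int.gcd_pos_of_ne_zero_left _ hNpos.ne'
  have hdvd : (Int.gcd N Y : ℤ) ∣ lam φ := by
    -- `lam` is the determinant of `L_A + (q + 1) L_C` against `L_C`, up to a change of basis.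
    have e : lam φ = N * Ly φ Letter.C - (Lx φ Letter.C + Ly φ Letter.C) * Y := by
      rw [hN, hY, lam]; ring
    rw [e]
    exact dvd_sub (Dvd.dvd.mul_right (Int.gcd_dvd_left ..) _)
      (Dvd.dvd.mul_left (Int.gcd_dvd_right ..) _)
  have lB : ∀ t, ((binImage φ t (Letter.B :: List.replicate q Letter.C)).length : ℤ) = N := by
    intro t; rw [binImage_length, hN, hx, hy]; ring
  have cB : ∀ t, ((binImage φ t (Letter.B :: List.replicate q Letter.C)).count true : ℤ) = Y := by
    intro t; rw [binImage_count, hY, hy]; ring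
  have lA : ∀ t, ((binImage φ t (Letter.A :: List.replicate (q + 1) Letter.C)).length : ℤ) =
      N := by
    intro t; rw [binImage_length, hN]; push_cast; ring
  have cA : ∀ t, ((binImage φ t
      (Letter.A :: List.replicate (q + 1) Letter.C)).count true : ℤ) = Y := by
    intro t; rw [binImage_count, hY]; push_cast; ring
  have lC : ∀ t, ((binImage φ t
      (Letter.C :: Letter.A :: List.replicate q Letter.C)).length : ℤ) = N := by
    intro t
    rw [← lA t, binImage_AC, binImage_CA, List.length_append, List.length_append]
    push_cast; ring
  have cC : ∀ t, ((binImage φ t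
      (Letter.C :: Letter.A :: List.replicate q Letter.C)).count true : ℤ) = Y := by
    intro t
    rw [← cA t, binImage_AC, binImage_CA, List.count_append, List.count_append]
    push_cast; ring
  have b1 : ∀ t, |prefSum (binImage φ t (Letter.B :: List.replicate q Letter.C)) -
      prefSum (binImage φ t (Letter.A :: List.replicate (q + 1) Letter.C))| ≤ Int.gcd N Y := by
    intro t
    have := prefSum_sub_le _ _ (by exact_mod_cast (lB t).trans (lA t).symm)
      (by exact_mod_cast (cB t).trans (cA t).symm)
      (by have := lA t; omega) (balanced_AC_BC hφ t q 3)
    rwa [lA t, cA t] at this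
  have b2 : ∀ t, |prefSum (binImage φ t (Letter.C :: Letter.A :: List.replicate q Letter.C)) -
      prefSum (binImage φ t (Letter.B :: List.replicate q Letter.C))| ≤ Int.gcd N Y := by
    intro t
    have := prefSum_sub_le _ _ (by exact_mod_cast (lC t).trans (lB t).symm)
      (by exact_mod_cast (cC t).trans (cB t).symm)
      (by have := lB t; omega) (balanced_BC_CAC hφ t q 3)
    rwa [lB t, cB t] at this
  have b3 : ∀ t, prefSum (binImage φ t (Letter.C :: Letter.A :: List.replicate q Letter.C)) -
      prefSum (binImage φ t (Letter.A :: List.replicate (q + 1) Letter.C)) = lam φ := by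
    intro t
    rw [binImage_CA, binImage_AC, prefSum_append, prefSum_append, binImage_length,
      binImage_length, binImage_count, binImage_count, lam]
    push_cast; ring
  have b4 := binImage_prefSum φ q Letter.B
  have b5 := binImage_prefSum φ (q + 1) Letter.A
  have hde : (prefSum (binImage φ true (Letter.B :: List.replicate q Letter.C)) -
      prefSum (binImage φ true (Letter.A :: List.replicate (q + 1) Letter.C))) -
      (prefSum (binImage φ false (Letter.B :: List.replicate q Letter.C)) -
      prefSum (binImage φ false (Letter.A :: List.replicate (q + 1) Letter.C))) = exc φ := by
    rw [exc]; push_cast at b5; linear_combination b4 - b5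
  have key := abs_eq_of_two_points hg hlam hdvd (by rw [hde]; exact hexc) (b1 true) (b1 false)
    (by rw [← b3 true, sub_sub_sub_cancel_right]; exact b2 true)
    (by rw [← b3 false, sub_sub_sub_cancel_right]; exact b2 false)
  rwa [hde] at key

/-! ### The incidence matrix -/

lemma det_incMat {φ : Morph} (hφ : Preserves3iet φ) : (incMat φ).det = lam φ * exc φ := by
  obtain ⟨h1, h2⟩ := minors_eq hφ
  rw [Matrix.det_fin_three]
  simp only [incMat, ltr, Matrix.cons_val_zero, Matrix.cons_val_one, Matrix.cons_val]
  have e : lam φ * exc φ = nB φ Letter.B * lam φ - nB φ Letter.A * lam φ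
      - nB φ Letter.C * lam φ := by rw [exc]; ring
  rw [e]
  nth_rewrite 2 [← h2]
  nth_rewrite 2 [← h1]
  simp only [lam, nB, Lx, Ly]
  ring

lemma incMat_mul_Emat {φ : Morph} (hφ : Preserves3iet φ) :
    incMat φ * Emat * (incMat φ)ᵀ = lam φ • Emat := by
  obtain ⟨h1, h2⟩ := minors_eq hφ
  have h3 : Lx φ Letter.A * Ly φ Letter.C - Lx φ Letter.C * Ly φ Letter.A = lam φ := rfl
  generalize lam φ = d at *
  simp only [Lx, Ly] at h1 h2 h3
  ext i j
  fin_cases i <;> fin_cases j <;>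
    simp [Matrix.mul_apply, Fin.sum_univ_three, incMat, ltr, Emat] <;> linarith

lemma abs_lam_exc {φ : Morph} (hφ : Preserves3iet φ) (hlam : lam φ ≠ 0) (hexc : exc φ ≠ 0) :
    |lam φ| = 1 ∧ |exc φ| = 1 := by
  obtain ⟨h1, h2⟩ := minors_eq hφ
  have h3 : Lx φ Letter.A * Ly φ Letter.C - Lx φ Letter.C * Ly φ Letter.A = lam φ := rfl
  -- `L_B - L_A - L_C` is orthogonal, for the determinant form, to the independent `L_A`, `L_C`.
  have hx : Lx φ Letter.B = Lx φ Letter.A + Lx φ Letter.C := by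
    apply mul_left_cancel₀ hlam
    linear_combination -Lx φ Letter.B * h3 + Lx φ Letter.A * h2 + Lx φ Letter.C * h1
  have hy : Ly φ Letter.B = Ly φ Letter.A + Ly φ Letter.C := by
    apply mul_left_cancel₀ hlam
    linear_combination -Ly φ Letter.B * h3 + Ly φ Letter.A * h2 + Ly φ Letter.C * h1
  obtain ⟨g, hN0, hY0, hg0, he⟩ := lam_eq_gcd hφ hlam hexc hx hy 0
  obtain ⟨g', hN1, hY1, hg1, -⟩ := lam_eq_gcd hφ hlam hexc hx hy 1
  obtain rfl : g = g' := hg0.symm.trans hg1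
  have dYC : g ∣ Ly φ Letter.C := by
    have := dvd_sub hY1 hY0
    push_cast at this; ring_nf at this; exact this
  have dNC : g ∣ Lx φ Letter.C + Ly φ Letter.C := by
    have := dvd_sub hN1 hN0
    push_cast at this; ring_nf at this; exact this
  have dXC : g ∣ Lx φ Letter.C := (dvd_add_left dYC).1 dNC
  have dYA : g ∣ Ly φ Letter.A := by
    refine (dvd_add_left dYC).1 ?_
    simpa using hY0
  have dNA : g ∣ Lx φ Letter.A + Ly φ Letter.A := by
    refine (dvd_add_left dNC).1 ?_
    simpa using hN0
  have dXA : g ∣ Lx φ Letter.A := (dvd_add_left dYA).1 dNA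
  have hgpos : 0 < g := hg0 ▸ abs_pos.2 hlam
  have hsq : g * g ∣ g * 1 := by
    rw [mul_one]
    nth_rewrite 3 [← hg0]
    rw [dvd_abs]
    exact dvd_sub (mul_dvd_mul dXA dYC) (mul_dvd_mul dXC dYA)
  have hg : g = 1 :=
    Int.eq_one_of_dvd_one hgpos.le ((mul_dvd_mul_iff_left hgpos.ne').1 hsq)
  subst hg
  exact ⟨hg0, le_antisymm he (Int.one_le_abs hexc)⟩

/-- The incidence matrix of a 3iet preserving morphism, if nonsingular, lies in
E(3,ℕ): it satisfies M · E · Mᵀ = ±E and det M = ±1. -/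
theorem incidence_matrix_mem_E3N (φ : Morph) (hφ : Preserves3iet φ)
    (hdet : (incMat φ).det ≠ 0) :
    incMat φ ∈ E3N := by
  rw [det_incMat hφ] at hdet
  obtain ⟨hl, he⟩ := abs_lam_exc hφ (left_ne_zero_of_mul hdet) (right_ne_zero_of_mul hdet)
  refine ⟨fun i j => Int.natCast_nonneg _, ?_, ?_⟩
  · rw [incMat_mul_Emat hφ]
    rcases eq_or_eq_neg_of_abs_eq hl with h | h
    · left; rw [h, one_smul]
    · right; rw [h, neg_one_smul]
  · rw [det_incMat hφ]
    exact eq_or_eq_neg_of_abs_eq (by rw [abs_mul, hl, he, one_mul])
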